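/- Let x > 0, let a be a real number, and let c be a real number with c > 0 and c + a > 0. Then (1/(2π)) ∫_{t ∈ ℝ} [Γ(c+it) Γ(c+it+a) / Γ(1+c+it)] · x^{−(c+it)} dt = Γ(a, x), where Γ(a, x) = ∫_x^∞ u^{a−1} e^{−u} du is the upper incomplete gamma function, Γ on the left-hand side is the complex Gamma function, and the integral is a Lebesgue integral of a complex-valued function of t. (This is the Mellin–Barnes representation Γ(a, x) = (1/(2πi)) ∫_L [Γ(s)Γ(s+a)/Γ(1+s)] x^{−s} ds along the vertical line L = {c+it : t ∈ ℝ}.) -/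

import Mathlib

/-!
On the line `re s = c` the integrand is `Γ(s + a) / s * x ^ (-s)`, because `Γ(1 + s) = s Γ(s)`.
Fubini's theorem on the region `0 < y ≤ u` shows that `s ↦ Γ(s + a) / s` is the Mellin transform of
`y ↦ Γ(a, y)`:
`∫₀^∞ y ^ (s - 1) ∫_y^∞ u ^ (a - 1) e^{-u} du dy = ∫₀^∞ u ^ (a - 1) e^{-u} u ^ s / s du`
(`mellin_upperIncompleteGamma`). The claim is then Mellin inversion at the point `x`. It applies
because `Γ(a, ·)` is continuous on `(0, ∞)`, and because the Mellin transform is integrable on the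
line: with `z = s + a`, the identity `Γ(z) = Γ(z + 1) / z` and the bound `‖Γ(w)‖ ≤ Γ(re w)` give
`‖Γ(z) / s‖ ≤ Γ(c + a + 1) / (‖z‖ ‖s‖)`, which is `O(1 / (1 + t ^ 2))`.
-/

open MeasureTheory Real

/-- The upper incomplete gamma function `Γ(a, x) = ∫_x^∞ u^(a-1) e^(-u) du`. -/
noncomputable def upperIncompleteGamma (a x : ℝ) : ℝ :=
  ∫ u in Set.Ioi x, u ^ (a - 1) * Real.exp (-u)

open Set

/-- The integrand `u ^ (a - 1) e^{-u}` is integrable away from `0` for every real `a`. -/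
lemma integrableOn_rpow_mul_exp_neg (a : ℝ) {x : ℝ} (hx : 0 < x) :
    IntegrableOn (fun u : ℝ => u ^ (a - 1) * Real.exp (-u)) (Ioi x) := by
  simp_rw [mul_comm (_ ^ (a - 1))]
  refine integrable_of_isBigO_exp_neg one_half_pos ?_ (Gamma_integrand_isLittleO _).isBigO
  exact continuousOn_id.neg.rexp.mul
    (continuousOn_id.rpow_const fun u hu => Or.inl (hx.trans_le hu).ne')

lemma continuousAt_upperIncompleteGamma (a : ℝ) {x : ℝ} (hx : 0 < x) :
    ContinuousAt (upperIncompleteGamma a) x :=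
  ((integrableOn_rpow_mul_exp_neg a (half_pos hx)).continuousOn_Ici_primitive_Ioi).continuousAt
    (Ici_mem_nhds (half_lt_self hx))

lemma norm_Gamma_le_Gamma_re {z : ℂ} (hz : 0 < z.re) : ‖Complex.Gamma z‖ ≤ Real.Gamma z.re := by
  rw [Complex.Gamma_eq_integral hz, Real.Gamma_eq_integral hz, Complex.GammaIntegral]
  refine (norm_integral_le_integral_norm _).trans_eq ?_
  refine setIntegral_congr_fun measurableSet_Ioi fun u hu => ?_
  have hu : 0 < u := hu
  simp [Complex.norm_cpow_eq_rpow_re_of_pos hu, Complex.norm_exp]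

lemma integrable_inv_sq_add_sq {b : ℝ} (hb : 0 < b) :
    Integrable fun t : ℝ => (b ^ 2 + t ^ 2)⁻¹ := by
  refine ((integrable_inv_one_add_sq.comp_div hb.ne').const_mul (b ^ 2)⁻¹).congr (.of_forall ?_)
  intro t
  simp only
  field_simp

/-- The double integrand `y ^ (s - 1) u ^ (a - 1) e^{-u}`, cut off to the region `y ≤ u`. -/
noncomputable def mellinKernel (a : ℝ) (s : ℂ) (y u : ℝ) : ℂ :=
  (Iic u).indicator (fun y : ℝ => (y : ℂ) ^ (s - 1)) y * ((u ^ (a - 1) * Real.exp (-u) : ℝ) : ℂ)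

/-- Integrating out `u` gives the integrand of the Mellin transform of `Γ(a, ·)`. -/
lemma integral_mellinKernel_right (a : ℝ) (s : ℂ) {y : ℝ} (hy : 0 < y) :
    ∫ u in Ioi 0, mellinKernel a s y u = (y : ℂ) ^ (s - 1) • (upperIncompleteGamma a y : ℂ) := by
  have h (u : ℝ) : mellinKernel a s y u = (Ici y).indicator
      (fun u : ℝ => (y : ℂ) ^ (s - 1) * ((u ^ (a - 1) * Real.exp (-u) : ℝ) : ℂ)) u := by
    by_cases hu : y ≤ u <;> simp [mellinKernel, hu]
  simp_rw [h]
  rw [setIntegral_indicator measurableSet_Ici,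
    inter_eq_right.2 (Ici_subset_Ioi.2 hy),
    integral_Ici_eq_integral_Ioi, integral_const_mul, integral_complex_ofReal, smul_eq_mul,
    upperIncompleteGamma]

lemma integrable_mellinKernel_left (a : ℝ) {s : ℂ} (hs : 0 < s.re) {u : ℝ} (hu : 0 < u) :
    IntegrableOn (fun y => mellinKernel a s y u) (Ioi 0) := by
  refine Integrable.mul_const ?_ _
  rw [integrable_indicator_iff measurableSet_Iic, IntegrableOn,
    Measure.restrict_restrict measurableSet_Iic, Iic_inter_Ioi]
  exact (intervalIntegrable_iff_integrableOn_Ioc_of_le hu.le).1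
    (intervalIntegral.intervalIntegrable_cpow' (by simpa using hs))

/-- Integrating out `y ∈ (0, u]` gives the Euler integrand of `Γ(s + a)`, divided by `s`. -/
lemma integral_mellinKernel_left (a : ℝ) {s : ℂ} (hs : 0 < s.re) {u : ℝ} (hu : 0 < u) :
    ∫ y in Ioi 0, mellinKernel a s y u = (Real.exp (-u) * (u : ℂ) ^ (s + a - 1)) / s := by
  have hs0 : s ≠ 0 := fun h => by simp [h] at hs
  have hu0 : (u : ℂ) ≠ 0 := by exact_mod_cast hu.ne'
  simp only [mellinKernel]
  rw [integral_mul_const, setIntegral_indicator measurableSet_Iic, Ioi_inter_Iic,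
    ← intervalIntegral.integral_of_le hu.le, integral_cpow (Or.inl (by simpa using hs))]
  rw [show s + a - 1 = s + ((a - 1 : ℝ) : ℂ) by push_cast; ring, sub_add_cancel,
    Complex.cpow_add s _ hu0, ← Complex.ofReal_cpow hu.le, Complex.ofReal_zero,
    Complex.zero_cpow hs0]
  push_cast
  ring

/-- Replacing `s` by `re s` turns the kernel into its own norm, so the integral of the norm is
another instance of `integral_mellinKernel_left`. -/
lemma norm_mellinKernel (a : ℝ) (s : ℂ) {y u : ℝ} (hy : 0 < y) (hu : 0 < u) :
    ‖mellinKernel a s y u‖ = (mellinKernel a (s.re : ℂ) y u).re := by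
  by_cases h : y ≤ u
  · simp only [mellinKernel, mem_Iic, h, indicator_of_mem, norm_mul, Complex.norm_real,
      Complex.re_mul_ofReal, Complex.norm_cpow_eq_rpow_re_of_pos hy]
    rw [Real.norm_of_nonneg (by positivity),
      show (s.re : ℂ) - 1 = ((s.re - 1 : ℝ) : ℂ) by push_cast; rfl, ← Complex.ofReal_cpow hy.le]
    simp
  · simp [mellinKernel, h]

lemma integrable_mellinKernel {a : ℝ} {s : ℂ} (hs : 0 < s.re) (hsa : 0 < s.re + a) :
    Integrable (Function.uncurry (mellinKernel a s))
      ((volume.restrict (Ioi 0)).prod (volume.restrict (Ioi 0))) := by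
  have hmeas : Measurable (Function.uncurry (mellinKernel a s)) := by
    have h : Function.uncurry (mellinKernel a s) = fun p : ℝ × ℝ =>
        {p : ℝ × ℝ | p.1 ≤ p.2}.indicator (fun p => (p.1 : ℂ) ^ (s - 1)) p *
          ((p.2 ^ (a - 1) * Real.exp (-p.2) : ℝ) : ℂ) := by
      ext ⟨y, u⟩
      by_cases h : y ≤ u <;> simp [mellinKernel, h]
    rw [h]
    refine Measurable.mul (Measurable.indicator ?_ (measurableSet_le measurable_fst measurable_snd))
      ?_ <;> fun_prop
  refine (integrable_prod_iff' hmeas.aestronglyMeasurable).2 ⟨?_, ?_⟩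
  · filter_upwards [ae_restrict_mem measurableSet_Ioi] with u hu
    exact integrable_mellinKernel_left a hs hu
  · have hG := (Real.GammaIntegral_convergent hsa).div_const s.re
    refine IntegrableOn.congr_fun hG (fun u hu => ?_) measurableSet_Ioi
    have hu : 0 < u := hu
    have hre : 0 < ((s.re : ℂ)).re := by simpa using hs
    have h1 : ∫ y in Ioi 0, ‖mellinKernel a s y u‖ =
        (∫ y in Ioi 0, mellinKernel a (s.re : ℂ) y u).re := by
      refine Eq.trans ?_
        (Complex.reCLM.integral_comp_comm (integrable_mellinKernel_left a hre hu))
      exact setIntegral_congr_fun measurableSet_Ioi fun y hy => norm_mellinKernel a s hy hu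
    simp only [Function.uncurry]
    rw [h1, integral_mellinKernel_left a hre hu,
      show (s.re : ℂ) + a - 1 = ((s.re + a - 1 : ℝ) : ℂ) by push_cast; rfl,
      ← Complex.ofReal_cpow hu.le]
    norm_cast

lemma mellinConvergent_upperIncompleteGamma {a : ℝ} {s : ℂ} (hs : 0 < s.re)
    (hsa : 0 < s.re + a) :
    MellinConvergent (fun y => (upperIncompleteGamma a y : ℂ)) s :=
  IntegrableOn.congr_fun (integrable_mellinKernel hs hsa).integral_prod_left
    (fun _ hy => integral_mellinKernel_right a s hy) measurableSet_Ioi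

lemma mellin_upperIncompleteGamma {a : ℝ} {s : ℂ} (hs : 0 < s.re) (hsa : 0 < s.re + a) :
    mellin (fun y => (upperIncompleteGamma a y : ℂ)) s = Complex.Gamma (s + a) / s := by
  rw [mellin, ← setIntegral_congr_fun measurableSet_Ioi
      (fun _ hy => integral_mellinKernel_right a s hy),
    integral_integral_swap (integrable_mellinKernel hs hsa),
    setIntegral_congr_fun measurableSet_Ioi (fun _ hu => integral_mellinKernel_left a hs hu),
    integral_div, Complex.Gamma_eq_integral (by simpa using hsa), Complex.GammaIntegral]

lemma integrable_Gamma_div {a c : ℝ} (hc : 0 < c) (hca : 0 < c + a) :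
    Integrable fun t : ℝ => Complex.Gamma (c + t * Complex.I + a) / (c + t * Complex.I) := by
  have hcont : Continuous fun t : ℝ =>
      Complex.Gamma (c + t * Complex.I + a) / (c + t * Complex.I) := by
    refine Continuous.div (continuous_iff_continuousAt.2 fun t => ?_) (by fun_prop) fun t h => ?_
    · refine ContinuousAt.comp (g := Complex.Gamma) (Complex.continuousAt_Gamma _ fun m h => ?_)
        (by fun_prop)
      have := congrArg Complex.re h
      simp at this
      linarith [(Nat.cast_nonneg m : (0 : ℝ) ≤ m)]
    · have := congrArg Complex.re h
      simp at this
      exact hc.ne' this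
  have hint := ((integrable_inv_sq_add_sq hca).add (integrable_inv_sq_add_sq hc)).const_mul
    (Real.Gamma (c + a + 1))
  refine hint.mono' hcont.aestronglyMeasurable (.of_forall fun t => ?_)
  set z : ℂ := c + t * Complex.I + a with hz
  set s : ℂ := c + t * Complex.I with hs
  have hzre : z.re = c + a := by simp [hz, hs]
  have hz0 : z ≠ 0 := fun h => by simp [h] at hzre; linarith
  have hs0 : s ≠ 0 := fun h => by
    have : s.re = c := by simp [hs]
    simp [h] at this; linarith
  have hzn : (c + a) ^ 2 + t ^ 2 = ‖z‖ ^ 2 := by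
    rw [← Complex.normSq_eq_norm_sq, Complex.normSq_apply]; simp [hz, hs]; ring
  have hsn : c ^ 2 + t ^ 2 = ‖s‖ ^ 2 := by
    rw [← Complex.normSq_eq_norm_sq, Complex.normSq_apply]; simp [hs]; ring
  have hΓ : Complex.Gamma z = Complex.Gamma (z + 1) / z := by
    rw [Complex.Gamma_add_one z hz0, mul_div_cancel_left₀ _ hz0]
  have hle : ‖Complex.Gamma (z + 1)‖ ≤ Real.Gamma (c + a + 1) := by
    have := norm_Gamma_le_Gamma_re (z := z + 1) (by simp [hzre]; linarith)
    simpa [hzre] using this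
  have hamgm : ‖z‖⁻¹ * ‖s‖⁻¹ ≤ (‖z‖ ^ 2)⁻¹ + (‖s‖ ^ 2)⁻¹ := by
    rw [← inv_pow, ← inv_pow]
    nlinarith [sq_nonneg (‖z‖⁻¹ - ‖s‖⁻¹), sq_nonneg (‖z‖⁻¹), sq_nonneg (‖s‖⁻¹)]
  calc ‖Complex.Gamma z / s‖ = ‖Complex.Gamma (z + 1)‖ * (‖z‖⁻¹ * ‖s‖⁻¹) := by
        rw [hΓ, norm_div, norm_div]; ring
    _ ≤ Real.Gamma (c + a + 1) * ((‖z‖ ^ 2)⁻¹ + (‖s‖ ^ 2)⁻¹) := by gcongr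
    _ = _ := by simp only [Pi.add_apply, hzn, hsn]

/-- Mellin–Barnes representation of the upper incomplete gamma function:
for `x > 0`, `c > 0` and `c + a > 0`,
`(1/(2π)) ∫_{t∈ℝ} [Γ(c+it) Γ(c+it+a) / Γ(1+c+it)] x^{-(c+it)} dt = Γ(a, x)`. -/
theorem mellinBarnes_upperIncompleteGamma (x a c : ℝ) (hx : 0 < x)
    (hc : 0 < c) (hca : 0 < c + a) :
    (1 / (2 * Real.pi) : ℂ) *
        ∫ t : ℝ, Complex.Gamma (c + t * Complex.I) *
          Complex.Gamma (c + t * Complex.I + a) /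
          Complex.Gamma (1 + c + t * Complex.I) *
          (x : ℂ) ^ (-(c + t * Complex.I)) =
      ((upperIncompleteGamma a x : ℝ) : ℂ) := by
  have hmel (t : ℝ) : mellin (fun y => (upperIncompleteGamma a y : ℂ)) (c + t * Complex.I) =
      Complex.Gamma (c + t * Complex.I + a) / (c + t * Complex.I) :=
    mellin_upperIncompleteGamma (by simpa using hc) (by simpa using hca)
  have hinv := mellinInv_mellin_eq c (fun y => (upperIncompleteGamma a y : ℂ)) hx
    (mellinConvergent_upperIncompleteGamma (by simpa using hc) (by simpa using hca))
    ((integrable_Gamma_div hc hca).congr (.of_forall fun t => (hmel t).symm))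
    (Complex.continuous_ofReal.continuousAt.comp (continuousAt_upperIncompleteGamma a hx))
  rw [← hinv, mellinInv, Complex.real_smul]
  push_cast
  congr 2
  ext t
  have hre : 0 < (c + t * Complex.I : ℂ).re := by simpa using hc
  have hs0 : (c + t * Complex.I : ℂ) ≠ 0 := fun h => by rw [h] at hre; simp at hre
  have hΓ := Complex.Gamma_ne_zero_of_re_pos hre
  rw [hmel, smul_eq_mul, show (1 + c + t * Complex.I : ℂ) = c + t * Complex.I + 1 by ring,
    Complex.Gamma_add_one _ hs0, mul_comm (c + t * Complex.I : ℂ) (Complex.Gamma _),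
    mul_div_mul_left _ _ hΓ, mul_comm]
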